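/- arXiv:2305.17857 — 2 statements merged into one kernel-verified Lean document; each statement's English description precedes it below -/
import Mathlib

section
/- For every ψ ∈ C_c^∞(ℝ² \ {0}) and every θ ∈ S¹, one has T(Δψ)(0,θ) = (∂_θ² + 1) [T(|x|^{−2}ψ)(0,θ)], where Δ = ∂_{x₁}² + ∂_{x₂}² is the Laplacian on ℝ², |x|^{−2}ψ denotes the function x ↦ |x|^{−2}ψ(x), and ∂_θ² is the second derivative in θ of the smooth function θ ↦ T(|x|^{−2}ψ)(0,θ) on S¹. -/
open MeasureTheory Real

noncomputable section

/-- Directional derivative of a function on `ℝ²` in the direction `v`. -/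
def pd (v : ℝ × ℝ) (ψ : ℝ × ℝ → ℝ) : ℝ × ℝ → ℝ := fun p => fderiv ℝ ψ p v

/-- The Laplacian `Δ = ∂_{x₁}² + ∂_{x₂}²` on `ℝ²`. -/
def lap (ψ : ℝ × ℝ → ℝ) : ℝ × ℝ → ℝ := fun p =>
  pd (1, 0) (pd (1, 0) ψ) p + pd (0, 1) (pd (0, 1) ψ) p

/-- The X-ray transform `Tψ(s,θ)`. -/
def xray (ψ : ℝ × ℝ → ℝ) (s θ : ℝ) : ℝ :=
  ∫ t : ℝ, ψ (t * Real.cos θ - s * Real.sin θ, t * Real.sin θ + s * Real.cos θ)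

/-- The function `x ↦ |x|⁻² ψ(x)` on `ℝ²`. -/
def invSq (ψ : ℝ × ℝ → ℝ) : ℝ × ℝ → ℝ := fun p => (p.1 ^ 2 + p.2 ^ 2)⁻¹ * ψ p

/-!
Let `R = x₁∂₂ - x₂∂₁` generate the rotations and `E = x₁∂₁ + x₂∂₂` the dilations of the plane. In
polar coordinates `|x|²Δ = R² + E²`, so `Δψ = |x|⁻²R²ψ + |x|⁻²E²ψ` away from the origin. On lines
through the origin `|x|⁻²` does not depend on the angle, so `R` becomes `∂_θ` and the first summand
integrates to `∂_θ² T(|x|⁻²ψ)(0,θ)`. In the second summand, integrating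
`∂_t(t⁻¹ψ) = t⁻²(Eψ - ψ)` shows that `E` may be dropped twice.
-/

section LinearField

variable {E F : Type*} [NormedAddCommGroup E] [NormedSpace ℝ E]
  [NormedAddCommGroup F] [NormedSpace ℝ F]

/-- The derivative of `f` along the linear vector field `x ↦ X x`. The identity gives the Euler
operator, a skew-symmetric `X` the infinitesimal action of a rotation. -/
def fieldDeriv (X : E →L[ℝ] E) (f : E → F) : E → F := fun x => fderiv ℝ f x (X x)

theorem tsupport_fieldDeriv_subset (X : E →L[ℝ] E) (f : E → F) :
    tsupport (fieldDeriv X f) ⊆ tsupport f :=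
  closure_minimal (fun x hx => by
    contrapose hx
    simp [fieldDeriv, fderiv_of_notMem_tsupport ℝ hx]) (isClosed_tsupport f)

theorem fieldDeriv_fieldDeriv {f : E → F} (hf : ContDiff ℝ 2 f) (X : E →L[ℝ] E) (x : E) :
    fieldDeriv X (fieldDeriv X f) x =
      fderiv ℝ (fderiv ℝ f) x (X x) (X x) + fderiv ℝ f x (X (X x)) := by
  have hdf : DifferentiableAt ℝ (fderiv ℝ f) x :=
    (hf.fderiv_right (m := 1) one_add_one_eq_two.le).differentiable one_ne_zero x
  unfold fieldDeriv
  rw [fderiv_clm_apply hdf X.differentiableAt, X.fderiv, add_comm]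
  rfl

end LinearField

section TestFunction

variable {E F G : Type*} [NormedAddCommGroup E] [NormedSpace ℝ E]
  [NormedAddCommGroup F] [NormedSpace ℝ F] [NormedAddCommGroup G] [NormedSpace ℝ G]

/-- `f ∈ C_cⁿ(U)`, for a function `f` already extended by zero to the whole space. This is a
predicate, unlike Mathlib's bundled `TestFunction`, so that it applies to functions such as
`invSq ψ` and `fieldDeriv X ψ` directly. -/
structure IsTestFunctionOn (n : WithTop ℕ∞) (U : Set E) (f : E → F) : Prop where
  contDiff : ContDiff ℝ n f
  hasCompactSupport : HasCompactSupport f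
  tsupport_subset : tsupport f ⊆ U

namespace IsTestFunctionOn

variable {m n : WithTop ℕ∞} {U : Set E} {f : E → F}

theorem of_le (hf : IsTestFunctionOn n U f) (hmn : m ≤ n) : IsTestFunctionOn m U f :=
  ⟨hf.contDiff.of_le hmn, hf.hasCompactSupport, hf.tsupport_subset⟩

theorem fieldDeriv (hf : IsTestFunctionOn n U f) (hmn : m + 1 ≤ n) (X : E →L[ℝ] E) :
    IsTestFunctionOn m U (fieldDeriv X f) where
  contDiff := (hf.contDiff.fderiv_right hmn).clm_apply X.contDiff
  hasCompactSupport := hf.hasCompactSupport.of_isClosed_subset (isClosed_tsupport _)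
    (tsupport_fieldDeriv_subset X f)
  tsupport_subset := (tsupport_fieldDeriv_subset X f).trans hf.tsupport_subset

theorem smul (hf : IsTestFunctionOn n U f) {c : E → ℝ} (hc : ∀ x ∈ U, ContDiffAt ℝ n c x) :
    IsTestFunctionOn n U (fun x => c x • f x) where
  contDiff := contDiff_iff_contDiffAt.2 fun x => by
    by_cases hx : x ∈ tsupport f
    · exact (hc x (hf.tsupport_subset hx)).smul hf.contDiff.contDiffAt
    · refine (contDiffAt_const (c := (0 : F))).congr_of_eventuallyEq ?_
      filter_upwards [notMem_tsupport_iff_eventuallyEq.1 hx] with y hy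
      rw [hy, Pi.zero_apply, smul_zero]
  hasCompactSupport := hf.hasCompactSupport.smul_left
  tsupport_subset := (tsupport_smul_subset_right c f).trans hf.tsupport_subset

theorem comp_isClosedEmbedding (hf : IsTestFunctionOn n U f) {φ : G → E} (hφ : ContDiff ℝ n φ)
    (hφ' : Topology.IsClosedEmbedding φ) : IsTestFunctionOn n (φ ⁻¹' U) (f ∘ φ) where
  contDiff := hf.contDiff.comp hφ
  hasCompactSupport := hf.hasCompactSupport.comp_isClosedEmbedding hφ'
  tsupport_subset := (tsupport_comp_subset_preimage f hφ'.continuous).trans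
    (Set.preimage_mono hf.tsupport_subset)

theorem comp_smul_right (hf : IsTestFunctionOn n {0}ᶜ f) {v : E} (hv : v ≠ 0) :
    IsTestFunctionOn n {0}ᶜ (fun t : ℝ => f (t • v)) := by
  have hpre : (fun t : ℝ => t • v) ⁻¹' {0}ᶜ = {0}ᶜ := by
    ext t
    simp [hv]
  exact hpre ▸ hf.comp_isClosedEmbedding (contDiff_id.smul contDiff_const)
    (isClosedEmbedding_smul_left hv)

theorem integrable [MeasurableSpace E] [OpensMeasurableSpace E] {μ : Measure E}
    [IsFiniteMeasureOnCompacts μ] (hf : IsTestFunctionOn n U f) : Integrable f μ :=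
  hf.contDiff.continuous.integrable_of_hasCompactSupport hf.hasCompactSupport

end IsTestFunctionOn

end TestFunction

section LinesThroughOrigin

variable {E F : Type*} [NormedAddCommGroup E] [NormedSpace ℝ E] [NormedAddCommGroup F]

theorem exists_integrable_bound_comp_smul {f : E → F} (hf : Continuous f)
    (hsupp : HasCompactSupport f) {r : ℝ} (hr : 0 < r) :
    ∃ b : ℝ → ℝ, Integrable b ∧ ∀ (t : ℝ) (v : E), r ≤ ‖v‖ → ‖f (t • v)‖ ≤ b t := by
  obtain ⟨R, hR⟩ := hsupp.isCompact.isBounded.exists_norm_le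
  obtain ⟨C, hC⟩ := hsupp.exists_bound_of_continuous hf
  refine ⟨(Metric.closedBall 0 (R / r)).indicator fun _ => C,
    (integrable_indicator_iff Metric.isClosed_closedBall.measurableSet).2
      (integrableOn_const measure_closedBall_lt_top.ne), fun t v hv => ?_⟩
  by_cases ht : t ∈ Metric.closedBall (0 : ℝ) (R / r)
  · simpa only [Set.indicator_of_mem ht] using hC (t • v)
  · have hfar : R < ‖t • v‖ := by
      rw [mem_closedBall_zero_iff, not_le, div_lt_iff₀ hr] at ht
      rw [norm_smul]
      exact ht.trans_le (mul_le_mul_of_nonneg_left hv (norm_nonneg t))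
    have hzero : f (t • v) = 0 :=
      image_eq_zero_of_notMem_tsupport fun hmem => (hR _ hmem).not_gt hfar
    simp only [Set.indicator_of_notMem ht, hzero, norm_zero, le_refl]

theorem fieldDeriv_id_smul [NormedSpace ℝ F] (f : E → F) (t : ℝ) (v : E) :
    fieldDeriv (.id ℝ E) f (t • v) = t • fderiv ℝ f (t • v) v := by
  rw [fieldDeriv, ContinuousLinearMap.id_apply, map_smul]

theorem integral_inv_sq_mul_fieldDeriv_id {f : E → ℝ} (hf : IsTestFunctionOn 1 {0}ᶜ f) {v : E}
    (hv : v ≠ 0) :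
    ∫ t : ℝ, (t ^ 2)⁻¹ * fieldDeriv (.id ℝ E) f (t • v) = ∫ t : ℝ, (t ^ 2)⁻¹ * f (t • v) := by
  have hline := hf.comp_smul_right hv
  have hEuler : ∀ t : ℝ, (t ^ 2)⁻¹ * fieldDeriv (.id ℝ E) f (t • v) =
      t⁻¹ * fderiv ℝ f (t • v) v := fun t => by
    rcases eq_or_ne t 0 with rfl | ht
    · simp
    · rw [fieldDeriv_id_smul, smul_eq_mul]
      field_simp
  have hderiv : ∀ t : ℝ, HasDerivAt (fun t : ℝ => f (t • v)) (fderiv ℝ f (t • v) v) t := fun t => by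
    have hsmul : HasDerivAt (fun t : ℝ => t • v) v t := by
      simpa only [one_smul] using (hasDerivAt_id' t).smul_const v
    exact (hf.contDiff.differentiable one_ne_zero _).hasFDerivAt.comp_hasDerivAt t hsmul
  have hsq : ∀ t ∈ ({0}ᶜ : Set ℝ), ContDiffAt ℝ 0 (fun t => (t ^ 2)⁻¹) t := fun t ht =>
    (contDiffAt_id.pow 2).inv (pow_ne_zero 2 ht)
  have hinv : ∀ t ∈ ({0}ᶜ : Set ℝ), ContDiffAt ℝ 0 (fun t => t⁻¹) t := fun t ht =>
    contDiffAt_id.inv ht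
  have hparts := integral_mul_deriv_eq_deriv_mul_of_integrable
    (fun t ht => hasDerivAt_inv (hline.tsupport_subset ht)) (fun t _ => hderiv t)
    ((((hf.fieldDeriv le_rfl (.id ℝ E)).comp_smul_right hv).smul hsq).integrable.congr
      (.of_forall hEuler))
    (((hline.of_le zero_le_one).smul hsq).integrable.neg.congr
      (.of_forall fun t => (neg_mul _ _).symm))
    ((hline.of_le zero_le_one).smul hinv).integrable
  simpa only [hEuler, neg_mul, integral_neg, neg_neg] using hparts

end LinesThroughOrigin

section Laplacian

/-- The quarter turn `(x₁, x₂) ↦ (-x₂, x₁)`. As a vector field it generates the rotations, so that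
`fieldDeriv quarterTurn` is `x₁∂₂ - x₂∂₁`. -/
def quarterTurn : ℝ × ℝ →L[ℝ] ℝ × ℝ :=
  (-ContinuousLinearMap.snd ℝ ℝ ℝ).prod (ContinuousLinearMap.fst ℝ ℝ ℝ)

theorem quarterTurn_apply (p : ℝ × ℝ) : quarterTurn p = (-p.2, p.1) := rfl

theorem quarterTurn_quarterTurn (p : ℝ × ℝ) : quarterTurn (quarterTurn p) = -p := rfl

theorem pd_pd_eq_fderiv_fderiv {ψ : ℝ × ℝ → ℝ} (hψ : ContDiff ℝ 2 ψ) (v w p : ℝ × ℝ) :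
    pd v (pd w ψ) p = fderiv ℝ (fderiv ℝ ψ) p v w := by
  have hdψ : DifferentiableAt ℝ (fderiv ℝ ψ) p :=
    (hψ.fderiv_right (m := 1) one_add_one_eq_two.le).differentiable one_ne_zero p
  unfold pd
  simp [fderiv_clm_apply hdψ (differentiableAt_const w)]

theorem bilin_apply_self_add_quarterTurn (B : ℝ × ℝ →L[ℝ] ℝ × ℝ →L[ℝ] ℝ) (p : ℝ × ℝ) :
    B (quarterTurn p) (quarterTurn p) + B p p =
      (p.1 ^ 2 + p.2 ^ 2) * (B (1, 0) (1, 0) + B (0, 1) (0, 1)) := by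
  obtain ⟨a, b⟩ := p
  have hbasis : ∀ a b : ℝ, (a, b) = a • ((1, 0) : ℝ × ℝ) + b • ((0, 1) : ℝ × ℝ) := fun a b => by
    simp
  rw [quarterTurn_apply, hbasis (-b) a, hbasis a b]
  simp only [map_add, map_smul, add_apply, smul_apply, smul_eq_mul, Prod.fst_add, Prod.snd_add,
    Prod.smul_fst, Prod.smul_snd]
  ring

theorem sq_add_sq_mul_lap {ψ : ℝ × ℝ → ℝ} (hψ : ContDiff ℝ 2 ψ) (p : ℝ × ℝ) :
    (p.1 ^ 2 + p.2 ^ 2) * lap ψ p =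
      fieldDeriv quarterTurn (fieldDeriv quarterTurn ψ) p +
        fieldDeriv (.id ℝ _) (fieldDeriv (.id ℝ _) ψ) p := by
  rw [lap, pd_pd_eq_fderiv_fderiv hψ, pd_pd_eq_fderiv_fderiv hψ,
    ← bilin_apply_self_add_quarterTurn, fieldDeriv_fieldDeriv hψ, fieldDeriv_fieldDeriv hψ,
    quarterTurn_quarterTurn, map_neg]
  simp only [ContinuousLinearMap.id_apply]
  ring

theorem lap_eq_invSq_add_invSq {ψ : ℝ × ℝ → ℝ} (hψ : ContDiff ℝ 2 ψ) {p : ℝ × ℝ}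
    (hp : p.1 ^ 2 + p.2 ^ 2 ≠ 0) :
    lap ψ p = invSq (fieldDeriv quarterTurn (fieldDeriv quarterTurn ψ)) p +
      invSq (fieldDeriv (.id ℝ _) (fieldDeriv (.id ℝ _) ψ)) p := by
  rw [invSq, invSq, ← mul_add, ← sq_add_sq_mul_lap hψ, inv_mul_cancel_left₀ hp]

end Laplacian

section XRay

/-- The unit vector in the direction `θ`, so that `Tψ(0,θ)` integrates `ψ` over `ℝ • unitVec θ`.
Its norm in `ℝ × ℝ` is the maximum norm, which need not be `1`. -/
def unitVec (θ : ℝ) : ℝ × ℝ := (cos θ, sin θ)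

theorem smul_unitVec_sq_add_sq (t θ : ℝ) :
    (t • unitVec θ).1 ^ 2 + (t • unitVec θ).2 ^ 2 = t ^ 2 := by
  simp only [unitVec, Prod.smul_mk, smul_eq_mul, mul_pow, ← mul_add, cos_sq_add_sin_sq, mul_one]

theorem half_le_norm_unitVec (θ : ℝ) : 1 / 2 ≤ ‖unitVec θ‖ := by
  by_contra! h
  obtain ⟨hcos, hsin⟩ : |cos θ| < 1 / 2 ∧ |sin θ| < 1 / 2 := max_lt_iff.1 h
  rw [abs_lt] at hcos hsin
  nlinarith [sin_sq_add_cos_sq θ, hcos.1, hcos.2, hsin.1, hsin.2]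

theorem unitVec_ne_zero (θ : ℝ) : unitVec θ ≠ 0 :=
  norm_pos_iff.1 (one_half_pos.trans_le (half_le_norm_unitVec θ))

theorem hasDerivAt_unitVec (θ : ℝ) : HasDerivAt unitVec (quarterTurn (unitVec θ)) θ :=
  (hasDerivAt_cos θ).prodMk (hasDerivAt_sin θ)

theorem hasDerivAt_comp_smul_unitVec {f : ℝ × ℝ → ℝ} {t θ : ℝ}
    (hf : DifferentiableAt ℝ f (t • unitVec θ)) :
    HasDerivAt (fun θ => f (t • unitVec θ)) (fieldDeriv quarterTurn f (t • unitVec θ)) θ := by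
  rw [fieldDeriv, map_smul]
  exact hf.hasFDerivAt.comp_hasDerivAt θ ((hasDerivAt_unitVec θ).const_smul t)

theorem invSq_smul_unitVec (f : ℝ × ℝ → ℝ) (t θ : ℝ) :
    invSq f (t • unitVec θ) = (t ^ 2)⁻¹ * f (t • unitVec θ) := by
  rw [invSq, smul_unitVec_sq_add_sq]

theorem xray_zero_left (f : ℝ × ℝ → ℝ) (θ : ℝ) : xray f 0 θ = ∫ t : ℝ, f (t • unitVec θ) := by
  simp only [xray, unitVec, Prod.smul_mk, smul_eq_mul, zero_mul, sub_zero, add_zero]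

theorem IsTestFunctionOn.invSq {n : WithTop ℕ∞} {f : ℝ × ℝ → ℝ}
    (hf : IsTestFunctionOn n {0}ᶜ f) : IsTestFunctionOn n {0}ᶜ (invSq f) :=
  hf.smul fun p hp => ContDiffAt.inv (by fun_prop) fun h => hp <| by
    rw [add_eq_zero_iff_of_nonneg (sq_nonneg _) (sq_nonneg _), sq_eq_zero_iff, sq_eq_zero_iff] at h
    exact Prod.ext h.1 h.2

theorem hasDerivAt_xray_invSq_zero_left {f : ℝ × ℝ → ℝ} (hf : IsTestFunctionOn 1 {0}ᶜ f) (θ : ℝ) :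
    HasDerivAt (fun θ => xray (invSq f) 0 θ) (xray (invSq (fieldDeriv quarterTurn f)) 0 θ) θ := by
  simp only [xray_zero_left]
  have hline := fun θ => hf.invSq.comp_smul_right (unitVec_ne_zero θ)
  have hrot : IsTestFunctionOn 0 {0}ᶜ (invSq (fieldDeriv quarterTurn f)) :=
    (hf.fieldDeriv le_rfl _).invSq
  obtain ⟨b, hb, hle⟩ := exists_integrable_bound_comp_smul hrot.contDiff.continuous
    hrot.hasCompactSupport one_half_pos
  have hderiv : ∀ t θ : ℝ, HasDerivAt (fun θ => invSq f (t • unitVec θ))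
      (invSq (fieldDeriv quarterTurn f) (t • unitVec θ)) θ := fun t θ => by
    simp only [invSq_smul_unitVec]
    exact (hasDerivAt_comp_smul_unitVec (hf.contDiff.differentiable one_ne_zero _)).const_mul _
  exact (hasDerivAt_integral_of_dominated_loc_of_deriv_le Filter.univ_mem
    (.of_forall fun θ => (hline θ).integrable.aestronglyMeasurable) (hline θ).integrable
    (hrot.comp_smul_right (unitVec_ne_zero θ)).integrable.aestronglyMeasurable
    (.of_forall fun t θ _ => hle t _ (half_le_norm_unitVec θ)) hb
    (.of_forall fun t θ _ => hderiv t θ)).2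

theorem xray_invSq_fieldDeriv_id_zero_left {f : ℝ × ℝ → ℝ} (hf : IsTestFunctionOn 1 {0}ᶜ f)
    (θ : ℝ) : xray (invSq (fieldDeriv (.id ℝ _) f)) 0 θ = xray (invSq f) 0 θ := by
  simp only [xray_zero_left, invSq_smul_unitVec]
  exact integral_inv_sq_mul_fieldDeriv_id hf (unitVec_ne_zero θ)

theorem xray_lap_zero_left {ψ : ℝ × ℝ → ℝ} (hψ : IsTestFunctionOn 2 {0}ᶜ ψ) (θ : ℝ) :
    xray (lap ψ) 0 θ = xray (invSq (fieldDeriv quarterTurn (fieldDeriv quarterTurn ψ))) 0 θ +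
      xray (invSq (fieldDeriv (.id ℝ _) (fieldDeriv (.id ℝ _) ψ))) 0 θ := by
  have hint : ∀ X : ℝ × ℝ →L[ℝ] ℝ × ℝ,
      Integrable fun t : ℝ => invSq (fieldDeriv X (fieldDeriv X ψ)) (t • unitVec θ) := fun X =>
    (((hψ.fieldDeriv one_add_one_eq_two.le X).fieldDeriv (zero_add 1).le
      X).invSq.comp_smul_right (unitVec_ne_zero θ)).integrable
  simp only [xray_zero_left]
  rw [← integral_add (hint _) (hint _)]
  refine integral_congr_ae ?_
  filter_upwards [Measure.ae_ne volume (0 : ℝ)] with t ht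
  refine lap_eq_invSq_add_invSq hψ.contDiff ?_
  rw [smul_unitVec_sq_add_sq]
  exact pow_ne_zero 2 ht

end XRay

theorem xray_lap_eq_general (ψ : ℝ × ℝ → ℝ) (hψ : ContDiff ℝ 2 ψ) (hsupp : HasCompactSupport ψ)
    (h0 : (0, 0) ∉ tsupport ψ) (θ : ℝ) :
    xray (lap ψ) 0 θ =
      deriv (deriv (fun θ' => xray (invSq ψ) 0 θ')) θ + xray (invSq ψ) 0 θ := by
  have htest : IsTestFunctionOn 2 {0}ᶜ ψ := ⟨hψ, hsupp, Set.subset_compl_singleton_iff.2 h0⟩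
  have hfield : ∀ X, IsTestFunctionOn 1 {0}ᶜ (fieldDeriv X ψ) :=
    htest.fieldDeriv one_add_one_eq_two.le
  have hderiv : deriv (fun θ' => xray (invSq ψ) 0 θ') =
      fun θ' => xray (invSq (fieldDeriv quarterTurn ψ)) 0 θ' :=
    funext fun θ' => (hasDerivAt_xray_invSq_zero_left (htest.of_le one_le_two) θ').deriv
  rw [hderiv, (hasDerivAt_xray_invSq_zero_left (hfield _) θ).deriv, xray_lap_zero_left htest,
    xray_invSq_fieldDeriv_id_zero_left (hfield _),
    xray_invSq_fieldDeriv_id_zero_left (htest.of_le one_le_two)]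

/-- For `ψ ∈ C_c^∞(ℝ² \ {0})` one has `T(Δψ)(0,θ) = (∂_θ² + 1) T(|x|⁻²ψ)(0,θ)`. -/
theorem xray_lap_eq (ψ : ℝ × ℝ → ℝ) (hψ : ContDiff ℝ (⊤ : ℕ∞) ψ) (hsupp : HasCompactSupport ψ)
    (h0 : (0, 0) ∉ tsupport ψ) (θ : ℝ) :
    xray (lap ψ) 0 θ =
      deriv (deriv (fun θ' => xray (invSq ψ) 0 θ')) θ + xray (invSq ψ) 0 θ :=
  xray_lap_eq_general ψ (contDiff_infty.1 hψ 2) hsupp h0 θ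

end
end

section
/- Let ω ∈ C_c^∞(ℝ²;ℝ) and σ ∈ ℝ, and define the continuous function u : ℂ² → ℝ by u(x+iy) = Eω(x+iy) + σ|y| for x, y ∈ ℝ². Then u is plurisubharmonic on ℂ² (i.e. u(z) ≤ (1/2π)∫_{S¹} u(z + e^{iθ}v) dθ for all z, v ∈ ℂ²) if and only if T(Δω)(s,θ) + πσ ≥ 0 for all s ∈ ℝ and θ ∈ S¹, where Δ = ∂_{x₁}² + ∂_{x₂}² is the Laplacian on ℝ². -/
open MeasureTheory Real

noncomputable section

/-- A continuous function `u : ℂ² → ℝ` is plurisubharmonic if it satisfies the sub-mean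
value property on all complex lines. -/
def Psh (u : ℂ × ℂ → ℝ) : Prop :=
  ∀ z v : ℂ × ℂ,
    u z ≤ (1 / (2 * π)) * ∫ θ in (0:ℝ)..(2 * π), u (z + Complex.exp (θ * Complex.I) • v)

/-- The function `u(x+iy) = Eω(x+iy) + σ|y|`, where `E` is the extension operator
`Eω(x+iy) = (1/π) ∫_ℝ ω(x+ty)/(1+t²) dt`. -/
def uExt (ω : ℝ × ℝ → ℝ) (σ : ℝ) : ℂ × ℂ → ℝ := fun z =>
  (1 / π) * (∫ t : ℝ, ω (z.1.re + t * z.1.im, z.2.re + t * z.2.im) / (1 + t ^ 2))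
    + σ * Real.sqrt (z.1.im ^ 2 + z.2.im ^ 2)

/-!
On a complex line `ζ ↦ z + ζv` the function `u` is `C²` wherever the imaginary part `y` of `z + ζv`
is nonzero. Its Laplacian in `ζ` comes from the Hessian of `ω` integrated along a real line of
direction `y`; since derivatives along the line integrate to zero, only the normal component
survives, and it carries the whole of `Δω`. With `x` the real part of `z + ζv`, and since the
Hessian of `|y|` is purely normal too, the Laplacian is
`((y × Re v)² + (y × Im v)²) / (π |y|²) · (∫ Δω(x + ty) dt + πσ / |y|)`,
whose last factor is `(T(Δω) + πσ) / |y|` at the line `x + ℝy`.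

The sub-mean value property at small radii forces this to be nonnegative. Conversely, if
`Re v × Im v ≠ 0`, then `y` vanishes at no more than one point of the line, which the maximum
principle ignores after adding a small multiple of `|ζ - p|² + log |ζ - p|`. Such `v` are dense, and
both sides of the sub-mean value inequality depend continuously on `v`.
-/

open Filter Set Topology InnerProductSpace Laplacian

section SecondDerivative

variable {E : Type*} [NormedAddCommGroup E] [NormedSpace ℝ E]

theorem fderiv_fderiv_apply_eq_deriv_deriv {f : E → ℝ} {x : E} (hf : ContDiffAt ℝ 2 f x) (v : E) :
    fderiv ℝ (fderiv ℝ f) x v v = deriv (deriv fun t : ℝ => f (x + t • v)) 0 := by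
  have hline (t : ℝ) : HasDerivAt (fun t : ℝ => x + t • v) v t := by
    simpa using ((hasDerivAt_id t).smul_const v).const_add x
  have htendsto : Tendsto (fun t : ℝ => x + t • v) (𝓝 0) (𝓝 x) := by
    simpa using (hline 0).continuousAt.tendsto
  have hderiv : deriv (fun t : ℝ => f (x + t • v)) =ᶠ[𝓝 0] fun t => fderiv ℝ f (x + t • v) v := by
    filter_upwards [htendsto.eventually (hf.eventually (by simp))] with t ht
    exact ((ht.differentiableAt two_ne_zero).hasFDerivAt.comp_hasDerivAt t (hline t)).deriv
  have hfderiv : HasFDerivAt (fderiv ℝ f) (fderiv ℝ (fderiv ℝ f) x) (x + (0 : ℝ) • v) := by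
    simpa using ((hf.fderiv_right (m := 1) (by norm_num)).differentiableAt one_ne_zero).hasFDerivAt
  rw [hderiv.deriv_eq]
  exact ((ContinuousLinearMap.apply ℝ ℝ v).hasFDerivAt.comp_hasDerivAt 0
    (hfderiv.comp_hasDerivAt 0 (hline 0))).deriv.symm

theorem deriv_deriv_nonpos_of_isLocalMax {g : ℝ → ℝ} {a : ℝ} (h : IsLocalMax g a)
    (hg : ContinuousAt g a) : deriv (deriv g) a ≤ 0 := by
  by_contra! hpos
  have hmin : IsLocalMin g a := isLocalMin_of_deriv_deriv_pos hpos h.deriv_eq_zero hg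
  have hconst : g =ᶠ[𝓝 a] fun _ => g a := by
    filter_upwards [h, hmin] with t hle hge using le_antisymm hle hge
  rw [hconst.deriv.deriv_eq] at hpos
  simp at hpos

theorem fderiv_fderiv_apply_nonpos_of_isLocalMax {f : E → ℝ} {x : E} (hf : ContDiffAt ℝ 2 f x)
    (hmax : IsLocalMax f x) (v : E) : fderiv ℝ (fderiv ℝ f) x v v ≤ 0 := by
  have hline : Tendsto (fun t : ℝ => x + t • v) (𝓝 0) (𝓝 x) := by
    simpa using (by fun_prop : Continuous fun t : ℝ => x + t • v).tendsto 0
  rw [fderiv_fderiv_apply_eq_deriv_deriv hf]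
  refine deriv_deriv_nonpos_of_isLocalMax ?_ ?_
  · filter_upwards [hline.eventually hmax] with t ht
    simpa using ht
  · simpa [ContinuousAt, Function.comp_def] using hf.continuousAt.tendsto.comp hline

end SecondDerivative

section Laplacian

theorem laplacian_complex_eq (f : ℂ → ℝ) (z : ℂ) :
    (Δ f) z = fderiv ℝ (fderiv ℝ f) z 1 1
      + fderiv ℝ (fderiv ℝ f) z Complex.I Complex.I := by
  rw [laplacian_eq_iteratedFDeriv_complexPlane]
  simp [iteratedFDeriv_two_apply]

theorem laplacian_nonpos_of_isLocalMax {f : ℂ → ℝ} {z : ℂ} (hf : ContDiffAt ℝ 2 f z)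
    (hmax : IsLocalMax f z) : (Δ f) z ≤ 0 := by
  rw [laplacian_complex_eq]
  exact add_nonpos (fderiv_fderiv_apply_nonpos_of_isLocalMax hf hmax 1)
    (fderiv_fderiv_apply_nonpos_of_isLocalMax hf hmax Complex.I)

theorem laplacian_norm_sub_sq (p z : ℂ) : (Δ fun w : ℂ => ‖w - p‖ ^ 2) z = 4 := by
  have hsmooth : ContDiffAt ℝ 2 (fun w : ℂ => ‖w - p‖ ^ 2) z :=
    ((contDiff_id.sub contDiff_const).norm_sq ℝ).contDiffAt
  have hderiv (v : ℂ) : (deriv fun t : ℝ => ‖z + t • v - p‖ ^ 2) =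
      fun t => 2 * inner ℝ (z + t • v - p) v := by
    ext t
    simpa using ((((hasDerivAt_id t).smul_const v).const_add z).sub_const p).norm_sq.deriv
  have hderiv₂ (v : ℂ) :
      deriv (fun t : ℝ => 2 * inner ℝ (z + t • v - p) v) 0 = 2 * ‖v‖ ^ 2 := by
    have := ((((hasDerivAt_id (0 : ℝ)).smul_const v).const_add z).sub_const p).inner ℝ
      (hasDerivAt_const 0 v)
    simpa [real_inner_self_eq_norm_sq] using (this.const_mul 2).deriv
  rw [laplacian_complex_eq, fderiv_fderiv_apply_eq_deriv_deriv hsmooth,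
    fderiv_fderiv_apply_eq_deriv_deriv hsmooth, hderiv, hderiv, hderiv₂, hderiv₂]
  norm_num

end Laplacian

section MaximumPrinciple

variable {f : ℂ → ℝ} {K : Set ℂ} {p : ℂ} {M : ℝ}

-- `H` is the continuous extension of `exp ∘ F` across the point `p`, where `F` tends to `-∞`.
theorem exists_mem_frontier_le_of_laplacian_pos {F H : ℂ → ℝ} (hK : IsCompact K)
    (hH : ContinuousOn H K) (hHp : H p = 0) (hHF : ∀ z ≠ p, H z = exp (F z))
    (hsmooth : ∀ z ∈ interior K, z ≠ p → ContDiffAt ℝ 2 F z)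
    (hlap : ∀ z ∈ interior K, z ≠ p → 0 < (Δ F) z) {w : ℂ} (hw : w ∈ K) (hwp : w ≠ p) :
    ∃ z ∈ frontier K, F w ≤ F z := by
  obtain ⟨z, hzK, hz⟩ := hK.exists_isMaxOn ⟨w, hw⟩ hH
  have hzp : z ≠ p := by
    rintro rfl
    have hle : H w ≤ H z := hz hw
    rw [hHF w hwp, hHp] at hle
    exact hle.not_gt (exp_pos _)
  have hle {y : ℂ} (hy : y ∈ K) (hyp : y ≠ p) : F y ≤ F z := by
    have hyz : H y ≤ H z := hz hy
    rwa [hHF y hyp, hHF z hzp, exp_le_exp] at hyz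
  refine ⟨z, ⟨subset_closure hzK, fun hzint => ?_⟩, hle hw hwp⟩
  have hmax : IsLocalMax F z := by
    filter_upwards [mem_interior_iff_mem_nhds.1 hzint, isOpen_ne.mem_nhds hzp] with y using hle
  exact (laplacian_nonpos_of_isLocalMax (hsmooth z hzint hzp) hmax).not_gt (hlap z hzint hzp)

theorem contDiffAt_and_laplacian_norm_sub_sq_add_log {z : ℂ} (hz : z ≠ p) :
    ContDiffAt ℝ 2 (fun w : ℂ => ‖w - p‖ ^ 2 + log ‖w - p‖) z ∧
      (Δ fun w : ℂ => ‖w - p‖ ^ 2 + log ‖w - p‖) z = 4 := by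
  have hsq : ContDiffAt ℝ 2 (fun w : ℂ => ‖w - p‖ ^ 2) z :=
    ((contDiff_id.sub contDiff_const).norm_sq ℝ).contDiffAt
  have hlog : HarmonicAt (fun w => log ‖w - p‖) z :=
    AnalyticAt.harmonicAt_log_norm (f := fun w => w - p) (by fun_prop) (sub_ne_zero.2 hz)
  have hadd : (Δ fun w : ℂ => ‖w - p‖ ^ 2 + log ‖w - p‖) z = _ := hsq.laplacian_add hlog.1
  refine ⟨hsq.add hlog.1, ?_⟩
  rw [hadd, laplacian_norm_sub_sq, hlog.2.self_of_nhds, Pi.zero_apply, add_zero]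

theorem exists_mem_frontier_add_mul_le (hK : IsCompact K) (hf : ContinuousOn f K)
    (hsmooth : ∀ z ∈ interior K, z ≠ p → ContDiffAt ℝ 2 f z)
    (hlap : ∀ z ∈ interior K, z ≠ p → 0 ≤ (Δ f) z) {η : ℝ} (hη : 0 < η) {w : ℂ}
    (hw : w ∈ K) (hwp : w ≠ p) :
    ∃ z ∈ frontier K, f w + η * (‖w - p‖ ^ 2 + log ‖w - p‖) ≤
      f z + η * (‖z - p‖ ^ 2 + log ‖z - p‖) := by
  set q : ℂ → ℝ := fun z => ‖z - p‖ ^ 2 + log ‖z - p‖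
  have hq {z : ℂ} (hz : z ≠ p) := contDiffAt_and_laplacian_norm_sub_sq_add_log hz
  have hηq {z : ℂ} (hz : z ≠ p) : ContDiffAt ℝ 2 (η • q) z := (hq hz).1.const_smul η
  refine exists_mem_frontier_le_of_laplacian_pos (F := f + η • q)
    (H := fun z => exp (f z + η * ‖z - p‖ ^ 2) * ‖z - p‖ ^ η) hK ?_ ?_ (fun z hz => ?_)
    (fun z hz hzp => (hsmooth z hz hzp).add (hηq hzp)) (fun z hz hzp => ?_) hw hwp
  · refine ((hf.add ?_).rexp).mul (ContinuousOn.rpow_const ?_ fun _ _ => Or.inr hη.le) <;> fun_prop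
  · simp [zero_rpow hη.ne']
  · rw [rpow_def_of_pos (norm_sub_pos_iff.2 hz), ← exp_add]
    simp only [q, Pi.add_apply, Pi.smul_apply, smul_eq_mul]
    ring_nf
  · rw [(hsmooth z hz hzp).laplacian_add (hηq hzp), laplacian_smul η (hq hzp).1,
      (hq hzp).2]
    exact add_pos_of_nonneg_of_pos (hlap z hz hzp) (by simpa using hη)

theorem le_of_forall_mem_frontier_le_of_ne (hK : IsCompact K) (hf : ContinuousOn f K)
    (hsmooth : ∀ z ∈ interior K, z ≠ p → ContDiffAt ℝ 2 f z)
    (hlap : ∀ z ∈ interior K, z ≠ p → 0 ≤ (Δ f) z) (hM : ∀ z ∈ frontier K, f z ≤ M) {w : ℂ}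
    (hw : w ∈ K) (hwp : w ≠ p) : f w ≤ M := by
  obtain ⟨C, hC⟩ := hK.bddAbove_image (f := fun z : ℂ => ‖z - p‖ ^ 2 + ‖z - p‖) (by fun_prop)
  have hbound {η : ℝ} (hη : 0 < η) : f w ≤ M + η * (C - (‖w - p‖ ^ 2 + log ‖w - p‖)) := by
    obtain ⟨z, hz, hle⟩ := exists_mem_frontier_add_mul_le hK hf hsmooth hlap hη hw hwp
    have hzC : ‖z - p‖ ^ 2 + log ‖z - p‖ ≤ C :=
      (add_le_add_right (log_le_self (norm_nonneg _)) _).trans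
        (hC (mem_image_of_mem _ (hK.isClosed.frontier_subset hz)))
    linarith [hM z hz, mul_le_mul_of_nonneg_left hzC hη.le]
  have hlim : Tendsto (fun η : ℝ => M + η * (C - (‖w - p‖ ^ 2 + log ‖w - p‖))) (𝓝[>] 0) (𝓝 M) := by
    refine tendsto_nhdsWithin_of_tendsto_nhds ?_
    simpa using (by fun_prop : Continuous
      fun η : ℝ => M + η * (C - (‖w - p‖ ^ 2 + log ‖w - p‖))).tendsto 0
  exact ge_of_tendsto hlim (eventually_mem_nhdsWithin.mono fun _ => hbound)

theorem le_of_forall_mem_frontier_le_of_laplacian_nonneg (hK : IsCompact K)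
    (hf : ContinuousOn f K) (hsmooth : ∀ z ∈ interior K, z ≠ p → ContDiffAt ℝ 2 f z)
    (hlap : ∀ z ∈ interior K, z ≠ p → 0 ≤ (Δ f) z) (hM : ∀ z ∈ frontier K, f z ≤ M) {w : ℂ}
    (hw : w ∈ K) : f w ≤ M := by
  by_cases hwp : w = p
  · by_cases hint : w ∈ interior K
    · have hcont : Tendsto f (𝓝[≠] w) (𝓝 (f w)) :=
        (hf.continuousAt (mem_interior_iff_mem_nhds.1 hint)).tendsto.mono_left nhdsWithin_le_nhds
      refine le_of_tendsto hcont ?_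
      filter_upwards [self_mem_nhdsWithin,
        nhdsWithin_le_nhds (mem_interior_iff_mem_nhds.1 hint)] with z hzw hz
      exact le_of_forall_mem_frontier_le_of_ne hK hf hsmooth hlap hM hz (hwp ▸ hzw)
    · exact hM w ⟨subset_closure hw, hint⟩
  · exact le_of_forall_mem_frontier_le_of_ne hK hf hsmooth hlap hM hw hwp

end MaximumPrinciple

section SubmeanValue

theorem exists_polynomial_eval_add_conj_of_mem_span_fourier {T : ℝ} {g : C(AddCircle T, ℂ)}
    (hg : g ∈ Submodule.span ℂ (range (fourier (T := T)))) :
    ∃ P Q : Polynomial ℂ, ∀ x, g x = P.eval (AddCircle.toCircle x : ℂ)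
      + starRingEnd ℂ (Q.eval (AddCircle.toCircle x : ℂ)) := by
  induction hg using Submodule.span_induction with
  | mem g hg =>
    obtain ⟨n, rfl⟩ := hg
    obtain ⟨m, rfl | rfl⟩ := n.eq_nat_or_neg
    · exact ⟨Polynomial.X ^ m, 0, fun x => by simp [AddCircle.toCircle_nsmul]⟩
    · exact ⟨0, Polynomial.X ^ m, fun x => by rw [fourier_neg]; simp [AddCircle.toCircle_nsmul]⟩
  | zero => exact ⟨0, 0, by simp⟩
  | add g h _ _ hg hh =>
    obtain ⟨P, Q, hPQ⟩ := hg
    obtain ⟨R, S, hRS⟩ := hh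
    refine ⟨P + R, Q + S, fun x => ?_⟩
    simp only [ContinuousMap.add_apply, hPQ, hRS, Polynomial.eval_add, map_add]
    ring
  | smul c g _ hg =>
    obtain ⟨P, Q, hPQ⟩ := hg
    refine ⟨Polynomial.C c * P, Polynomial.C (starRingEnd ℂ c) * Q, fun x => ?_⟩
    simp only [ContinuousMap.smul_apply, hPQ, Polynomial.eval_mul, Polynomial.eval_C, map_mul,
      Complex.conj_conj, smul_eq_mul]
    ring

theorem exists_polynomial_re_eval_sub_lt (φ : C(Circle, ℝ)) {ε : ℝ} (hε : 0 < ε) :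
    ∃ P : Polynomial ℂ, ∀ z : Circle, |(P.eval (z : ℂ)).re - φ z| < ε := by
  have : Fact (0 < 2 * π) := ⟨two_pi_pos⟩
  let ψ : C(AddCircle (2 * π), ℂ) := ⟨fun x => φ (AddCircle.toCircle x), by fun_prop⟩
  have hψ : ψ ∈ closure (Submodule.span ℂ (range (fourier (T := 2 * π))) : Set _) := by
    rw [← Submodule.topologicalClosure_coe, span_fourier_closure_eq_top]
    trivial
  obtain ⟨g, hg, hgψ⟩ := Metric.mem_closure_iff.1 hψ ε hε
  obtain ⟨P, Q, hPQ⟩ := exists_polynomial_eval_add_conj_of_mem_span_fourier hg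
  refine ⟨P + Q, fun z => ?_⟩
  obtain ⟨x, rfl⟩ := (AddCircle.homeomorphCircle two_pi_pos.ne').surjective z
  rw [AddCircle.homeomorphCircle_apply]
  calc |((P + Q).eval (AddCircle.toCircle x : ℂ)).re - φ (AddCircle.toCircle x)|
      = |(g x - ψ x).re| := by simp [hPQ, ψ]
    _ ≤ ‖g x - ψ x‖ := Complex.abs_re_le_norm _
    _ ≤ dist ψ g := by
      rw [← dist_eq_norm, dist_comm]
      exact ContinuousMap.dist_apply_le_dist x
    _ < ε := hgψ

variable {f : ℂ → ℝ} {c : ℂ} {R : ℝ}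

theorem exists_harmonicAt_abs_sub_lt_on_sphere (hf : ContinuousOn f (Metric.sphere c R))
    (hR : 0 < R) {ε : ℝ} (hε : 0 < ε) :
    ∃ h : ℂ → ℝ, (∀ z, HarmonicAt h z) ∧ ∀ z ∈ Metric.sphere c R, |h z - f z| < ε := by
  have hmem (w : Circle) : c + R * (w : ℂ) ∈ Metric.sphere c R := by
    simp [Circle.norm_coe, abs_of_pos hR]
  obtain ⟨P, hP⟩ := exists_polynomial_re_eval_sub_lt
    ⟨fun w : Circle => f (c + R * w), hf.comp_continuous (by fun_prop) hmem⟩ hε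
  refine ⟨fun z => (P.eval ((z - c) / R)).re, fun z => AnalyticAt.harmonicAt_re ?_, fun z hz => ?_⟩
  · exact (Differentiable.analyticAt (by fun_prop) z)
  · have hR' : (R : ℂ) ≠ 0 := by exact_mod_cast hR.ne'
    have hnorm : ‖(z - c) / R‖ = 1 := by
      rw [norm_div, mem_sphere_iff_norm.1 hz, Complex.norm_real, norm_of_nonneg hR.le,
        div_self hR.ne']
    let w : Circle := ⟨(z - c) / R, mem_sphere_zero_iff_norm.2 hnorm⟩
    simpa [w, mul_div_cancel₀ _ hR'] using hP w

theorem le_circleAverage_of_laplacian_nonneg {p : ℂ} (hR : 0 < R)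
    (hf : ContinuousOn f (Metric.closedBall c R))
    (hsmooth : ∀ z ∈ Metric.ball c R, z ≠ p → ContDiffAt ℝ 2 f z)
    (hlap : ∀ z ∈ Metric.ball c R, z ≠ p → 0 ≤ (Δ f) z) : f c ≤ circleAverage f c R := by
  have hfR : ContinuousOn f (Metric.sphere c R) := hf.mono Metric.sphere_subset_closedBall
  refine le_of_forall_pos_le_add fun ε hε => ?_
  obtain ⟨h, hh, hhf⟩ := exists_harmonicAt_abs_sub_lt_on_sphere hfR hR (half_pos hε)
  have hhcont : Continuous h := continuous_iff_continuousAt.2 fun z => (hh z).1.continuousAt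
  have hmax : f c - h c ≤ ε / 2 := by
    refine le_of_forall_mem_frontier_le_of_laplacian_nonneg (f := f - h) (p := p)
      (isCompact_closedBall c R) (hf.sub hhcont.continuousOn) ?_ ?_ ?_
      (Metric.mem_closedBall_self hR.le)
    · rw [interior_closedBall c hR.ne']
      exact fun z hz hzp => (hsmooth z hz hzp).sub (hh z).1
    · rw [interior_closedBall c hR.ne']
      intro z hz hzp
      rw [(hsmooth z hz hzp).laplacian_sub (hh z).1, (hh z).2.self_of_nhds]
      simpa using hlap z hz hzp
    · rw [frontier_closedBall c hR.ne']
      exact fun z hz => by linarith [(abs_lt.1 (hhf z hz)).1, Pi.sub_apply f h z]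
  have hfint : CircleIntegrable f c R := hfR.circleIntegrable hR.le
  have havg : h c ≤ circleAverage f c R + ε / 2 := by
    calc h c = circleAverage h c R :=
          (InnerProductSpace.HarmonicOnNhd.circleAverage_eq fun z _ => hh z).symm
      _ ≤ circleAverage (fun z => f z + ε / 2) c R := by
          refine circleAverage_mono (hhcont.continuousOn.circleIntegrable hR.le)
            (hfint.add (circleIntegrable_const _ _ _)) fun z hz => ?_
          rw [abs_of_pos hR] at hz
          linarith [(abs_lt.1 (hhf z hz)).2]
      _ = circleAverage f c R + ε / 2 := by
          rw [circleAverage_fun_add hfint (circleIntegrable_const _ _ _), circleAverage_const]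
  linarith

theorem continuousAt_laplacian (hf : ContDiffAt ℝ 2 f c) : ContinuousAt (Δ f) c := by
  have hD : ContinuousAt (fderiv ℝ (fderiv ℝ f)) c :=
    ((hf.fderiv_right (m := 1) (by norm_num)).fderiv_right (m := 0) (by norm_num)).continuousAt
  rw [funext (laplacian_complex_eq f)]
  fun_prop

theorem circleAverage_le_of_laplacian_nonpos (hR : 0 < R)
    (hsmooth : ∀ z ∈ Metric.closedBall c R, ContDiffAt ℝ 2 f z)
    (hlap : ∀ z ∈ Metric.ball c R, (Δ f) z ≤ 0) : circleAverage f c R ≤ f c := by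
  have hcont : ContinuousOn f (Metric.closedBall c R) :=
    fun z hz => (hsmooth z hz).continuousAt.continuousWithinAt
  have hneg := le_circleAverage_of_laplacian_nonneg (p := c) hR hcont.neg
    (fun z hz _ => (hsmooth z (Metric.ball_subset_closedBall hz)).neg)
    (fun z hz _ => by simpa [laplacian_neg] using hlap z hz)
  rw [← neg_one_smul ℝ f, circleAverage_smul] at hneg
  simpa using hneg

theorem laplacian_nonneg_of_le_circleAverage (hf : ContDiffAt ℝ 2 f c)
    (hsub : ∀ᶠ r in 𝓝[>] 0, f c ≤ circleAverage f c r) : 0 ≤ (Δ f) c := by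
  by_contra! hneg
  obtain ⟨η, hη, hηc⟩ : ∃ η > 0, (Δ f) c < -(4 * η) :=
    ⟨-(Δ f) c / 8, by linarith, by linarith⟩
  set q : ℂ → ℝ := fun z => ‖z - c‖ ^ 2
  have hq (z : ℂ) : ContDiffAt ℝ 2 q z := ((contDiff_id.sub contDiff_const).norm_sq ℝ).contDiffAt
  have hηq (z : ℂ) : ContDiffAt ℝ 2 (η • q) z := (hq z).const_smul η
  have hnhds : ∀ᶠ z in 𝓝 c, ContDiffAt ℝ 2 f z ∧ (Δ f) z < -(4 * η) :=
    (hf.eventually (by simp)).and ((continuousAt_laplacian hf).eventually_lt_const hηc)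
  obtain ⟨δ, hδ, hball⟩ := Metric.eventually_nhds_iff_ball.1 hnhds
  obtain ⟨r, hr, hr0, hrδ⟩ := (hsub.and (Ioo_mem_nhdsGT hδ)).exists
  have hfδ {z : ℂ} (hz : z ∈ Metric.closedBall c r) :=
    hball z (Metric.closedBall_subset_ball hrδ hz)
  have hsuper : circleAverage (f + η • q) c r ≤ (f + η • q) c := by
    refine circleAverage_le_of_laplacian_nonpos hr0
      (fun z hz => (hfδ hz).1.add (hηq z)) fun z hz => ?_
    have hz' := hfδ (Metric.ball_subset_closedBall hz)
    rw [hz'.1.laplacian_add (hηq z), laplacian_smul η (hq z),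
      laplacian_norm_sub_sq, smul_eq_mul]
    linarith [hz'.2]
  have hfint : CircleIntegrable f c r := by
    refine ContinuousOn.circleIntegrable hr0.le fun z hz => ?_
    exact (hfδ (Metric.sphere_subset_closedBall hz)).1.continuousAt.continuousWithinAt
  have havg : circleAverage (f + η • q) c r = circleAverage f c r + η * r ^ 2 := by
    have hqr : circleAverage q c r = r ^ 2 :=
      circleAverage_const_on_circle fun z hz => by
        simp only [q, mem_sphere_iff_norm.1 hz, sq_abs]
    have hqint : CircleIntegrable (η • q) c r :=
      (continuous_iff_continuousAt.2 fun z => (hηq z).continuousAt).continuousOn.circleIntegrable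
        hr0.le
    rw [circleAverage_add hfint hqint, circleAverage_smul, hqr, smul_eq_mul]
  have hqc : (f + η • q) c = f c := by simp [q]
  nlinarith [mul_pos hη (pow_pos hr0 2)]

end SubmeanValue

section ParametricIntegral

variable {E G : Type*} [NormedAddCommGroup E] [NormedSpace ℝ E]
  [NormedAddCommGroup G] [NormedSpace ℝ G]

theorem contDiff_uncurry_fderiv_left {F : E → ℝ → G} {m n : WithTop ℕ∞}
    (hF : ContDiff ℝ n (Function.uncurry F)) (hmn : m + 1 ≤ n) :
    ContDiff ℝ m (Function.uncurry fun x t => fderiv ℝ (fun y => F y t) x) :=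
  ContDiff.fderiv (f := fun (q : E × ℝ) y => F y q.2) (g := Prod.fst)
    (hF.comp (by fun_prop : ContDiff ℝ n fun q : (E × ℝ) × E => (q.2, q.1.2))) contDiff_fst hmn

variable [ProperSpace E]

theorem hasFDerivAt_intervalIntegral_of_contDiff {F : E → ℝ → G}
    (hF : ContDiff ℝ 1 (Function.uncurry F)) (a b : ℝ) (x : E) :
    HasFDerivAt (fun x => ∫ t in a..b, F x t) (∫ t in a..b, fderiv ℝ (fun y => F y t) x) x := by
  have hF' := (contDiff_uncurry_fderiv_left (m := 0) hF (by simp)).continuous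
  obtain ⟨C, hC⟩ := ((isCompact_closedBall x 1).prod
    (isCompact_uIcc (a := a) (b := b))).exists_bound_of_continuousOn hF'.continuousOn
  refine intervalIntegral.hasFDerivAt_integral_of_dominated_of_fderiv_le
    (𝕜 := ℝ) (μ := volume) (F' := fun x t => fderiv ℝ (fun y => F y t) x) (bound := fun _ => C)
    (Metric.closedBall_mem_nhds x one_pos) ?_ ?_ ?_ ?_ intervalIntegrable_const ?_
  · exact .of_forall fun y => (hF.continuous.comp (.prodMk_right y)).aestronglyMeasurable
  · exact (hF.continuous.comp (.prodMk_right x)).intervalIntegrable _ _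
  · exact (hF'.comp (.prodMk_right x)).aestronglyMeasurable
  · exact .of_forall fun t ht y hy => hC (y, t) ⟨hy, uIoc_subset_uIcc ht⟩
  · exact .of_forall fun t _ y _ => ((hF.differentiable one_ne_zero).comp
      (differentiable_id.prodMk (differentiable_const t)) y).hasFDerivAt

theorem contDiff_one_intervalIntegral {F : E → ℝ → G}
    (hF : ContDiff ℝ 1 (Function.uncurry F)) (a b : ℝ) :
    ContDiff ℝ 1 fun x => ∫ t in a..b, F x t := by
  have hderiv := hasFDerivAt_intervalIntegral_of_contDiff hF a b
  refine contDiff_one_iff_fderiv.2 ⟨fun x => (hderiv x).differentiableAt, ?_⟩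
  rw [funext fun x => (hderiv x).fderiv]
  exact intervalIntegral.continuous_parametric_intervalIntegral_of_continuous'
    (contDiff_uncurry_fderiv_left (m := 0) hF (by simp)).continuous a b

theorem contDiff_two_intervalIntegral {F : E → ℝ → G}
    (hF : ContDiff ℝ 2 (Function.uncurry F)) (a b : ℝ) :
    ContDiff ℝ 2 fun x => ∫ t in a..b, F x t := by
  have hF₁ : ContDiff ℝ 1 (Function.uncurry F) := hF.of_le one_le_two
  have hderiv : fderiv ℝ (fun x => ∫ t in a..b, F x t) =
      fun x => ∫ t in a..b, fderiv ℝ (fun y => F y t) x :=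
    funext fun x => (hasFDerivAt_intervalIntegral_of_contDiff hF₁ a b x).fderiv
  rw [← one_add_one_eq_two, contDiff_succ_iff_fderiv, hderiv]
  exact ⟨(contDiff_one_intervalIntegral hF₁ a b).differentiable one_ne_zero, by simp,
    contDiff_one_intervalIntegral (contDiff_uncurry_fderiv_left hF (by norm_num)) a b⟩

theorem deriv_intervalIntegral {F : ℝ → ℝ → ℝ} (hF : ContDiff ℝ 1 (Function.uncurry F))
    (a b : ℝ) :
    deriv (fun x => ∫ t in a..b, F x t) = fun x => ∫ t in a..b, deriv (fun y => F y t) x := by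
  ext x
  have hF' := (contDiff_uncurry_fderiv_left (m := 0) hF (by simp)).continuous
  have hint : IntervalIntegrable (fun t => fderiv ℝ (fun y => F y t) x) volume a b :=
    (hF'.comp (.prodMk_right x)).intervalIntegrable _ _
  rw [(hasFDerivAt_intervalIntegral_of_contDiff hF a b x).hasDerivAt.deriv,
    ContinuousLinearMap.intervalIntegral_apply hint]
  simp only [fderiv_apply_one_eq_deriv]

theorem fderiv_fderiv_intervalIntegral_apply {F : E → ℝ → ℝ}
    (hF : ContDiff ℝ 2 (Function.uncurry F)) (a b : ℝ) (x v : E) :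
    fderiv ℝ (fderiv ℝ fun x => ∫ t in a..b, F x t) x v v =
      ∫ t in a..b, fderiv ℝ (fderiv ℝ fun y => F y t) x v v := by
  have hFt (t : ℝ) : ContDiff ℝ 2 fun y => F y t :=
    hF.comp (contDiff_id.prodMk contDiff_const)
  have hline : ContDiff ℝ 2 (Function.uncurry fun s t : ℝ => F (x + s • v) t) :=
    hF.comp (g := Function.uncurry F)
      (by fun_prop : ContDiff ℝ 2 fun q : ℝ × ℝ => ((x + q.1 • v, q.2) : E × ℝ))
  have hline' : ContDiff ℝ 1 (Function.uncurry fun s t : ℝ =>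
      deriv (fun r : ℝ => F (x + r • v) t) s) := by
    simp only [← fderiv_apply_one_eq_deriv]
    exact (contDiff_uncurry_fderiv_left hline (by norm_num)).clm_apply contDiff_const
  rw [fderiv_fderiv_apply_eq_deriv_deriv (contDiff_two_intervalIntegral hF a b).contDiffAt,
    deriv_intervalIntegral (hline.of_le one_le_two), deriv_intervalIntegral hline']
  simp only [fderiv_fderiv_apply_eq_deriv_deriv (hFt _).contDiffAt]

theorem integral_eventuallyEq_intervalIntegral {α : Type*} {l : Filter α} {F : α → ℝ → G} {N : ℝ}
    (hN : ∀ᶠ a in l, ∀ t, N ≤ |t| → F a t = 0) :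
    (fun a => ∫ t, F a t) =ᶠ[l] fun a => ∫ t in -N..N, F a t := by
  filter_upwards [hN] with a ha
  refine (intervalIntegral.integral_eq_integral_of_support_subset fun t ht => ?_).symm
  have := abs_lt.1 (not_le.1 (mt (ha t) ht))
  exact ⟨this.1, this.2.le⟩

theorem contDiffAt_integral_of_eventually_eq_zero {F : E → ℝ → G} {x : E} {N : ℝ}
    (hF : ContDiff ℝ 2 (Function.uncurry F)) (hN : ∀ᶠ y in 𝓝 x, ∀ t, N ≤ |t| → F y t = 0) :
    ContDiffAt ℝ 2 (fun y => ∫ t, F y t) x :=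
  (contDiff_two_intervalIntegral hF (-N) N).contDiffAt.congr_of_eventuallyEq
    (integral_eventuallyEq_intervalIntegral hN)

variable {F : ℂ → ℝ → ℝ}

theorem laplacian_intervalIntegral (hF : ContDiff ℝ 2 (Function.uncurry F)) (a b : ℝ) (z : ℂ) :
    (Δ fun w => ∫ t in a..b, F w t) z = ∫ t in a..b, (Δ fun w => F w t) z := by
  have hF' := contDiff_uncurry_fderiv_left (m := 1) hF (by norm_num)
  have hF'' := (contDiff_uncurry_fderiv_left (m := 0) hF' (by simp)).continuous
  have hint (v : ℂ) :
      IntervalIntegrable (fun t => fderiv ℝ (fderiv ℝ fun w => F w t) z v v) volume a b :=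
    (((hF''.comp (.prodMk_right z)).clm_apply continuous_const).clm_apply
      continuous_const).intervalIntegrable _ _
  simp_rw [laplacian_complex_eq]
  rw [fderiv_fderiv_intervalIntegral_apply hF, fderiv_fderiv_intervalIntegral_apply hF,
    intervalIntegral.integral_add (hint 1) (hint Complex.I)]

theorem laplacian_integral_of_eventually_eq_zero {z : ℂ} {N : ℝ}
    (hF : ContDiff ℝ 2 (Function.uncurry F))
    (hN : ∀ᶠ w in 𝓝 z, ∀ t, N ≤ |t| → F w t = 0) :
    (Δ fun w => ∫ t, F w t) z = ∫ t, (Δ fun w => F w t) z := by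
  have hlap : ∀ᶠ w in 𝓝 z, ∀ t, N ≤ |t| → (Δ fun w => F w t) w = 0 := by
    filter_upwards [hN.eventually_nhds] with w hw t ht
    have : (fun w => F w t) =ᶠ[𝓝 w] fun _ => 0 := hw.mono fun y hy => hy t ht
    rw [(laplacian_congr_nhds this).self_of_nhds, laplacian_const]
    rfl
  rw [(laplacian_congr_nhds (integral_eventuallyEq_intervalIntegral hN)).self_of_nhds,
    laplacian_intervalIntegral hF]
  exact (integral_eventuallyEq_intervalIntegral hlap).self_of_nhds.symm

end ParametricIntegral

section LineIntegral

variable {E G : Type*} [NormedAddCommGroup E] [NormedSpace ℝ E]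
  [NormedAddCommGroup G] {f : E → G}

theorem exists_forall_abs_ge_apply_add_smul_eq_zero (hf : HasCompactSupport f) {α : Type*}
    {l : Filter α} {X Y : α → E} {x y : E} (hX : Tendsto X l (𝓝 x)) (hY : Tendsto Y l (𝓝 y))
    (hy : y ≠ 0) : ∃ N : ℝ, ∀ᶠ a in l, ∀ t : ℝ, N ≤ |t| → f (X a + t • Y a) = 0 := by
  obtain ⟨R, -, hR⟩ := hf.exists_pos_le_norm
  have hy' : 0 < ‖y‖ := norm_pos_iff.2 hy
  refine ⟨(R + (‖x‖ + 1)) / (‖y‖ / 2), ?_⟩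
  filter_upwards [hX.norm.eventually_le_const (lt_add_one ‖x‖),
    hY.norm.eventually_const_le (half_lt_self hy')] with a hXa hYa t ht
  refine hR _ ?_
  rw [div_le_iff₀ (half_pos hy')] at ht
  calc R ≤ |t| * (‖y‖ / 2) - (‖x‖ + 1) := by linarith
    _ ≤ |t| * ‖Y a‖ - ‖X a‖ := by gcongr
    _ = ‖t • Y a‖ - ‖X a‖ := by rw [norm_smul, Real.norm_eq_abs]
    _ ≤ ‖X a + t • Y a‖ := by rw [add_comm]; exact norm_sub_le_norm_add _ _

theorem hasCompactSupport_apply_add_smul (hf : HasCompactSupport f) (x : E) {y : E} (hy : y ≠ 0) :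
    HasCompactSupport fun t : ℝ => f (x + t • y) :=
  hf.comp_isClosedEmbedding
    ((Homeomorph.addLeft x).isClosedEmbedding.comp (isClosedEmbedding_smul_left hy))

theorem integrable_apply_add_smul (hf : HasCompactSupport f) (hc : Continuous f) (x : E) {y : E}
    (hy : y ≠ 0) : Integrable fun t : ℝ => f (x + t • y) :=
  (hc.comp (by fun_prop : Continuous fun t : ℝ => x + t • y)).integrable_of_hasCompactSupport
    (hasCompactSupport_apply_add_smul hf x hy)

theorem integral_fderiv_add_smul_apply_eq_zero [NormedSpace ℝ G] [CompleteSpace G]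
    (hf : HasCompactSupport f) (hd : ContDiff ℝ 1 f) (x : E) {y : E} (hy : y ≠ 0) :
    ∫ t : ℝ, fderiv ℝ f (x + t • y) y = 0 := by
  have hderiv (t : ℝ) : HasDerivAt (fun t : ℝ => f (x + t • y)) (fderiv ℝ f (x + t • y) y) t := by
    have hline : HasDerivAt (fun t : ℝ => x + t • y) y t := by
      simpa using ((hasDerivAt_id t).smul_const y).const_add x
    exact (hd.differentiable one_ne_zero _).hasFDerivAt.comp_hasDerivAt t hline
  refine integral_eq_zero_of_hasDerivAt_of_integrable hderiv ?_
    (integrable_apply_add_smul hf hd.continuous x hy)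
  exact integrable_apply_add_smul (hf.fderiv_apply ℝ y)
    ((hd.continuous_fderiv one_ne_zero).clm_apply continuous_const) x hy

variable {g : E → ℝ}

theorem contDiff_fderiv_const_apply (hg : ContDiff ℝ 2 g) (w : E) :
    ContDiff ℝ 1 fun p => fderiv ℝ g p w :=
  (hg.fderiv_right (by norm_num)).clm_apply contDiff_const

theorem fderiv_fderiv_const_apply (hg : ContDiff ℝ 2 g) (p v w : E) :
    fderiv ℝ (fun p => fderiv ℝ g p w) p v = fderiv ℝ (fderiv ℝ g) p v w := by
  have hd : Differentiable ℝ (fderiv ℝ g) :=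
    (hg.fderiv_right (m := 1) (by norm_num)).differentiable one_ne_zero
  rw [fderiv_clm_apply (hd p) (by fun_prop)]
  simp

theorem integrable_fderiv_fderiv_add_smul_apply (hg : ContDiff ℝ 2 g) (hs : HasCompactSupport g)
    (x : E) {y : E} (hy : y ≠ 0) (v w : E) :
    Integrable fun t : ℝ => fderiv ℝ (fderiv ℝ g) (x + t • y) v w := by
  simp only [← fderiv_fderiv_const_apply hg]
  exact integrable_apply_add_smul ((hs.fderiv_apply ℝ w).fderiv_apply ℝ v)
    (((contDiff_fderiv_const_apply hg w).continuous_fderiv one_ne_zero).clm_apply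
      continuous_const) x hy

theorem integral_fderiv_fderiv_add_smul_apply_left_eq_zero (hg : ContDiff ℝ 2 g)
    (hs : HasCompactSupport g) (x : E) {y : E} (hy : y ≠ 0) (w : E) :
    ∫ t : ℝ, fderiv ℝ (fderiv ℝ g) (x + t • y) y w = 0 := by
  simp only [← fderiv_fderiv_const_apply hg]
  exact integral_fderiv_add_smul_apply_eq_zero (hs.fderiv_apply ℝ w)
    (contDiff_fderiv_const_apply hg w) x hy

end LineIntegral

section Plane

/-- The determinant of two vectors of the plane. -/
def cross (v w : ℝ × ℝ) : ℝ := v.1 * w.2 - v.2 * w.1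

/-- The Euclidean norm on `ℝ × ℝ`, whose `‖·‖` is the sup norm. -/
def euclNorm (p : ℝ × ℝ) : ℝ := √(p.1 ^ 2 + p.2 ^ 2)

theorem euclNorm_sq (p : ℝ × ℝ) : euclNorm p ^ 2 = p.1 ^ 2 + p.2 ^ 2 :=
  sq_sqrt (by positivity)

theorem euclNorm_pos {p : ℝ × ℝ} (hp : p ≠ 0) : 0 < euclNorm p := by
  refine sqrt_pos.2 ((by positivity : 0 ≤ p.1 ^ 2 + p.2 ^ 2).lt_of_ne' fun h => hp ?_)
  ext <;> exact pow_eq_zero_iff two_ne_zero |>.1 (by nlinarith [sq_nonneg p.1, sq_nonneg p.2])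

theorem continuous_euclNorm : Continuous euclNorm := by
  unfold euclNorm
  fun_prop

theorem contDiffAt_euclNorm {n : WithTop ℕ∞} {p : ℝ × ℝ} (hp : p ≠ 0) :
    ContDiffAt ℝ n euclNorm p :=
  ContDiffAt.sqrt (by fun_prop) (sqrt_ne_zero'.1 (euclNorm_pos hp).ne').ne'

theorem fderiv_fderiv_euclNorm_apply {p : ℝ × ℝ} (hp : p ≠ 0) (w : ℝ × ℝ) :
    fderiv ℝ (fderiv ℝ euclNorm) p w w = cross p w ^ 2 / euclNorm p ^ 3 := by
  have hderiv {t : ℝ} (ht : p + t • w ≠ 0) : HasDerivAt (fun t : ℝ => euclNorm (p + t • w))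
      (((p + t • w).1 * w.1 + (p + t • w).2 * w.2) / euclNorm (p + t • w)) t := by
    have hcoord (a b : ℝ) :
        HasDerivAt (fun t : ℝ => (a + t * b) ^ 2) (2 * ((a + t * b) * b)) t := by
      simpa [mul_assoc] using (((hasDerivAt_id t).mul_const b).const_add a).fun_pow 2
    refine (((hcoord p.1 w.1).add (hcoord p.2 w.2)).sqrt
      (sqrt_ne_zero'.1 (euclNorm_pos ht).ne').ne').congr_deriv ?_
    rw [← mul_add]
    exact mul_div_mul_left _ _ two_ne_zero
  have hp₀ : p + (0 : ℝ) • w ≠ 0 := by simpa using hp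
  have hne : ∀ᶠ t : ℝ in 𝓝 0, p + t • w ≠ 0 :=
    (by fun_prop : Continuous fun t : ℝ => p + t • w).continuousAt.eventually_ne hp₀
  have hnum : HasDerivAt (fun t : ℝ => (p + t • w).1 * w.1 + (p + t • w).2 * w.2)
      (w.1 ^ 2 + w.2 ^ 2) 0 := by
    have hcoord (a b : ℝ) : HasDerivAt (fun t : ℝ => (a + t * b) * b) (b ^ 2) 0 := by
      simpa [sq] using (((hasDerivAt_id 0).mul_const b).const_add a).mul_const b
    exact (hcoord p.1 w.1).add (hcoord p.2 w.2)
  rw [fderiv_fderiv_apply_eq_deriv_deriv (contDiffAt_euclNorm hp),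
    EventuallyEq.deriv_eq (hne.mono fun t ht => (hderiv ht).deriv),
    (hnum.fun_div (hderiv hp₀) (euclNorm_pos hp₀).ne').deriv]
  simp only [zero_smul, add_zero, cross]
  have hnorm := euclNorm_pos hp
  field_simp
  linear_combination (w.1 ^ 2 + w.2 ^ 2) * euclNorm_sq p

variable {ω : ℝ × ℝ → ℝ}

theorem lap_eq_fderiv_fderiv (hω : ContDiff ℝ 2 ω) (p : ℝ × ℝ) :
    lap ω p = fderiv ℝ (fderiv ℝ ω) p (1, 0) (1, 0) + fderiv ℝ (fderiv ℝ ω) p (0, 1) (0, 1) := by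
  rw [← fderiv_fderiv_const_apply hω, ← fderiv_fderiv_const_apply hω]
  rfl

-- `q` comes from the decomposition `|y|² w = (y · w) y + (y × w) y^⊥`.
theorem exists_forall_sq_mul_apply_self_eq_cross_sq_mul_trace_add (y w : ℝ × ℝ) :
    ∃ q : ℝ × ℝ, ∀ B : ℝ × ℝ →L[ℝ] ℝ × ℝ →L[ℝ] ℝ, (∀ v w, B v w = B w v) →
      (y.1 ^ 2 + y.2 ^ 2) ^ 2 * B w w =
        cross y w ^ 2 * (y.1 ^ 2 + y.2 ^ 2) * (B (1, 0) (1, 0) + B (0, 1) (0, 1)) + B y q := by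
  refine ⟨((y.1 * w.1 + y.2 * w.2) ^ 2 - cross y w ^ 2) • y +
    (2 * (y.1 * w.1 + y.2 * w.2) * cross y w) • (-y.2, y.1), fun B hB => ?_⟩
  have hcoord (v : ℝ × ℝ) : v = v.1 • (1, 0) + v.2 • (0, 1) := by ext <;> simp
  have hexpand (v w : ℝ × ℝ) : B v w = v.1 * w.1 * B (1, 0) (1, 0) +
      (v.1 * w.2 + v.2 * w.1) * B (1, 0) (0, 1) + v.2 * w.2 * B (0, 1) (0, 1) := by
    nth_rw 1 [hcoord v, hcoord w]
    simp only [map_add, map_smul, add_apply, smul_apply, smul_eq_mul, hB (0, 1) (1, 0)]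
    ring
  rw [hexpand w w, hexpand y]
  simp only [cross, Prod.fst_add, Prod.snd_add, Prod.smul_fst, Prod.smul_snd, smul_eq_mul]
  ring

theorem integral_fderiv_fderiv_add_smul_apply_self (hω : ContDiff ℝ 2 ω)
    (hs : HasCompactSupport ω) (x : ℝ × ℝ) {y : ℝ × ℝ} (hy : y ≠ 0) (w : ℝ × ℝ) :
    ∫ t : ℝ, fderiv ℝ (fderiv ℝ ω) (x + t • y) w w =
      cross y w ^ 2 / euclNorm y ^ 2 * ∫ t : ℝ, lap ω (x + t • y) := by
  obtain ⟨q, hq⟩ := exists_forall_sq_mul_apply_self_eq_cross_sq_mul_trace_add y w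
  have hsymm (p v w : ℝ × ℝ) : fderiv ℝ (fderiv ℝ ω) p v w = fderiv ℝ (fderiv ℝ ω) p w v :=
    (hω.contDiffAt.isSymmSndFDerivAt (by simp)).eq v w
  have hint := integrable_fderiv_fderiv_add_smul_apply hω hs x hy
  have hmain : (euclNorm y ^ 2) ^ 2 * ∫ t : ℝ, fderiv ℝ (fderiv ℝ ω) (x + t • y) w w =
      cross y w ^ 2 * euclNorm y ^ 2 * ∫ t : ℝ, lap ω (x + t • y) := by
    simp only [lap_eq_fderiv_fderiv hω]
    rw [← integral_const_mul, ← integral_const_mul]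
    simp only [euclNorm_sq, fun t : ℝ => hq _ (hsymm (x + t • y))]
    rw [integral_add (by exact ((hint _ _).add (hint _ _)).const_mul _) (hint _ _),
      integral_fderiv_fderiv_add_smul_apply_left_eq_zero hω hs x hy, add_zero]
  have hnorm := euclNorm_pos hy
  rw [div_mul_eq_mul_div, eq_div_iff (by positivity)]
  exact mul_left_cancel₀ (pow_pos hnorm 2).ne' (by linear_combination hmain)

theorem integral_add_smul_eq_xray (ψ : ℝ × ℝ → ℝ) (s θ : ℝ) :
    ∫ t : ℝ, ψ (s • (-sin θ, cos θ) + t • (cos θ, sin θ)) = xray ψ s θ := by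
  simp [xray, sub_eq_neg_add, add_comm]

theorem exists_integral_add_smul_eq_xray_div (x : ℝ × ℝ) {y : ℝ × ℝ} (hy : y ≠ 0) :
    ∃ s θ : ℝ, ∀ ψ : ℝ × ℝ → ℝ, ∫ t : ℝ, ψ (x + t • y) = xray ψ s θ / euclNorm y := by
  set r := euclNorm y with hr
  set θ := Complex.arg ⟨y.1, y.2⟩
  have hr₀ : 0 < r := euclNorm_pos hy
  have hnorm : ‖(⟨y.1, y.2⟩ : ℂ)‖ = r := by
    rw [Complex.norm_eq_sqrt_sq_add_sq, hr, euclNorm]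
  have hy₁ : y.1 = r * cos θ := by rw [← hnorm, Complex.norm_mul_cos_arg]
  have hy₂ : y.2 = r * sin θ := by rw [← hnorm, Complex.norm_mul_sin_arg]
  set s := x.2 * cos θ - x.1 * sin θ with hs
  set k := x.1 * cos θ + x.2 * sin θ with hk
  have hline (t : ℝ) : x + t • y = s • (-sin θ, cos θ) + (r * t + k) • (cos θ, sin θ) := by
    ext
    · simp [hy₁, hs, hk]; linear_combination -x.1 * sin_sq_add_cos_sq θ
    · simp [hy₂, hs, hk]; linear_combination -x.2 * sin_sq_add_cos_sq θ
  refine ⟨s, θ, fun ψ => ?_⟩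
  simp only [hline]
  rw [Measure.integral_comp_mul_left
      (fun t => ψ (s • (-sin θ, cos θ) + (t + k) • (cos θ, sin θ))) r,
    integral_add_right_eq_self (fun t => ψ (s • (-sin θ, cos θ) + t • (cos θ, sin θ))) k,
    integral_add_smul_eq_xray, abs_of_pos (inv_pos.2 hr₀), smul_eq_mul, inv_mul_eq_div]

end Plane

section ComplexLine

/-- The real part of a vector of `ℂ²`. -/
def rePart : ℂ × ℂ →L[ℝ] ℝ × ℝ := Complex.reCLM.prodMap Complex.reCLM

/-- The imaginary part of a vector of `ℂ²`. -/
def imPart : ℂ × ℂ →L[ℝ] ℝ × ℝ := Complex.imCLM.prodMap Complex.imCLM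

/-- The extension operator `E`: for `z = x + iy`, `Eω(z) = (1/π) ∫ ω(x+ty)/(1+t²) dt`. -/
def extension (ω : ℝ × ℝ → ℝ) (z : ℂ × ℂ) : ℝ :=
  1 / π * ∫ t : ℝ, ω (rePart z + t • imPart z) / (1 + t ^ 2)

/-- The integrand of `π · Eω` along the complex line `ζ ↦ z + ζv`. -/
def lineIntegrand (ω : ℝ × ℝ → ℝ) (z v : ℂ × ℂ) (ζ : ℂ) (t : ℝ) : ℝ :=
  ω (rePart (z + ζ • v) + t • imPart (z + ζ • v)) / (1 + t ^ 2)

variable {ω : ℝ × ℝ → ℝ} {z v : ℂ × ℂ} {ζ : ℂ}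

theorem uExt_eq (ω : ℝ × ℝ → ℝ) (σ : ℝ) (z : ℂ × ℂ) :
    uExt ω σ z = extension ω z + σ * euclNorm (imPart z) := rfl

theorem rePart_I_smul (v : ℂ × ℂ) : rePart (Complex.I • v) = -imPart v := by
  ext <;> simp [rePart, imPart]

theorem imPart_I_smul (v : ℂ × ℂ) : imPart (Complex.I • v) = rePart v := by
  ext <;> simp [rePart, imPart]

theorem laplacian_comp_add_smul {G : Type*} [NormedAddCommGroup G] [NormedSpace ℝ G] {f : G → ℝ}
    (A : ℂ × ℂ →L[ℝ] G) (hf : ContDiffAt ℝ 2 f (A (z + ζ • v))) :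
    (Δ fun w : ℂ => f (A (z + w • v))) ζ = fderiv ℝ (fderiv ℝ f) (A (z + ζ • v)) (A v) (A v) +
      fderiv ℝ (fderiv ℝ f) (A (z + ζ • v)) (A (Complex.I • v)) (A (Complex.I • v)) := by
  have hsmooth : ContDiffAt ℝ 2 (fun w : ℂ => f (A (z + w • v))) ζ :=
    hf.comp ζ (by fun_prop : ContDiffAt ℝ 2 (fun w : ℂ => A (z + w • v)) ζ)
  have hline (t : ℝ) (w : ℂ) : A (z + (ζ + t • w) • v) = A (z + ζ • v) + t • A (w • v) := by
    rw [add_smul, ← add_assoc, map_add A (z + ζ • v), smul_assoc, map_smul]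
  rw [laplacian_complex_eq, fderiv_fderiv_apply_eq_deriv_deriv hsmooth,
    fderiv_fderiv_apply_eq_deriv_deriv hsmooth, fderiv_fderiv_apply_eq_deriv_deriv hf,
    fderiv_fderiv_apply_eq_deriv_deriv hf]
  simp only [hline, one_smul]

-- The lines through `v` and `iv` are mapped to directions whose Hessian terms add up to a multiple
-- of `1 + t²`, which cancels the kernel.
theorem laplacian_lineIntegrand (hω : ContDiff ℝ 2 ω) (z v : ℂ × ℂ) (ζ : ℂ) (t : ℝ) :
    (Δ fun w => lineIntegrand ω z v w t) ζ =
      fderiv ℝ (fderiv ℝ ω) (rePart (z + ζ • v) + t • imPart (z + ζ • v)) (rePart v) (rePart v) +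
        fderiv ℝ (fderiv ℝ ω) (rePart (z + ζ • v) + t • imPart (z + ζ • v))
          (imPart v) (imPart v) := by
  set A := rePart + t • imPart with hA
  have hfun : (fun w => lineIntegrand ω z v w t) =
      (1 + t ^ 2)⁻¹ • fun w : ℂ => ω (A (z + w • v)) := funext fun w => div_eq_inv_mul _ _
  have hsmooth : ContDiffAt ℝ 2 (fun w : ℂ => ω (A (z + w • v))) ζ := by fun_prop
  have hv : A v = rePart v + t • imPart v := rfl
  have hIv : A (Complex.I • v) = t • rePart v - imPart v := by
    rw [hA, add_apply, smul_apply, rePart_I_smul, imPart_I_smul, neg_add_eq_sub]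
  change _ = fderiv ℝ (fderiv ℝ ω) (A (z + ζ • v)) (rePart v) (rePart v) +
    fderiv ℝ (fderiv ℝ ω) (A (z + ζ • v)) (imPart v) (imPart v)
  rw [hfun, laplacian_smul _ hsmooth, laplacian_comp_add_smul A hω.contDiffAt, hv, hIv, smul_eq_mul,
    inv_mul_eq_iff_eq_mul₀ (by positivity)]
  simp only [map_add, map_sub, map_smul, add_apply, sub_apply, smul_apply, smul_eq_mul]
  ring

theorem contDiff_uncurry_lineIntegrand (hω : ContDiff ℝ 2 ω) (z v : ℂ × ℂ) :
    ContDiff ℝ 2 (Function.uncurry (lineIntegrand ω z v)) :=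
  (hω.comp (by fun_prop : ContDiff ℝ 2 fun q : ℂ × ℝ =>
    rePart (z + q.1 • v) + q.2 • imPart (z + q.1 • v))).div (by fun_prop)
    fun q => by positivity

theorem exists_eventually_lineIntegrand_eq_zero (hs : HasCompactSupport ω)
    (hY : imPart (z + ζ • v) ≠ 0) :
    ∃ N : ℝ, ∀ᶠ w : ℂ in 𝓝 ζ, ∀ t : ℝ, N ≤ |t| → lineIntegrand ω z v w t = 0 := by
  have hcont (A : ℂ × ℂ →L[ℝ] ℝ × ℝ) :
      Tendsto (fun w : ℂ => A (z + w • v)) (𝓝 ζ) (𝓝 (A (z + ζ • v))) :=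
    (by fun_prop : Continuous fun w : ℂ => A (z + w • v)).continuousAt
  obtain ⟨N, hN⟩ :=
    exists_forall_abs_ge_apply_add_smul_eq_zero hs (hcont rePart) (hcont imPart) hY
  exact ⟨N, hN.mono fun w hw t ht => by rw [lineIntegrand, hw t ht, zero_div]⟩

theorem contDiffAt_extension_line (hω : ContDiff ℝ 2 ω) (hs : HasCompactSupport ω)
    (hY : imPart (z + ζ • v) ≠ 0) : ContDiffAt ℝ 2 (fun w : ℂ => extension ω (z + w • v)) ζ := by
  obtain ⟨N, hN⟩ := exists_eventually_lineIntegrand_eq_zero hs hY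
  exact contDiffAt_const.mul
    (contDiffAt_integral_of_eventually_eq_zero (contDiff_uncurry_lineIntegrand hω z v) hN)

theorem laplacian_extension_line (hω : ContDiff ℝ 2 ω) (hs : HasCompactSupport ω)
    (hY : imPart (z + ζ • v) ≠ 0) :
    (Δ fun w : ℂ => extension ω (z + w • v)) ζ = 1 / π *
      ((cross (imPart (z + ζ • v)) (rePart v) ^ 2 +
          cross (imPart (z + ζ • v)) (imPart v) ^ 2) / euclNorm (imPart (z + ζ • v)) ^ 2 *
        ∫ t : ℝ, lap ω (rePart (z + ζ • v) + t • imPart (z + ζ • v))) := by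
  obtain ⟨N, hN⟩ := exists_eventually_lineIntegrand_eq_zero hs hY
  have hF := contDiff_uncurry_lineIntegrand hω z v
  have hint := integrable_fderiv_fderiv_add_smul_apply hω hs (rePart (z + ζ • v)) hY
  refine (laplacian_smul (1 / π) (contDiffAt_integral_of_eventually_eq_zero hF hN)).trans ?_
  rw [laplacian_integral_of_eventually_eq_zero hF hN, smul_eq_mul]
  simp only [laplacian_lineIntegrand hω]
  rw [integral_add (hint _ _) (hint _ _), integral_fderiv_fderiv_add_smul_apply_self hω hs _ hY,
    integral_fderiv_fderiv_add_smul_apply_self hω hs _ hY, add_div, add_mul]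

theorem contDiffAt_euclNorm_imPart_line (hY : imPart (z + ζ • v) ≠ 0) :
    ContDiffAt ℝ 2 (fun w : ℂ => euclNorm (imPart (z + w • v))) ζ :=
  ContDiffAt.comp (g := euclNorm) ζ (contDiffAt_euclNorm hY)
    (by fun_prop : ContDiffAt ℝ 2 (fun w : ℂ => imPart (z + w • v)) ζ)

theorem contDiffAt_uExt_line (hω : ContDiff ℝ 2 ω) (hs : HasCompactSupport ω) (σ : ℝ)
    (hY : imPart (z + ζ • v) ≠ 0) : ContDiffAt ℝ 2 (fun w : ℂ => uExt ω σ (z + w • v)) ζ :=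
  (contDiffAt_extension_line hω hs hY).add
    (contDiffAt_const.mul (contDiffAt_euclNorm_imPart_line hY))

theorem laplacian_uExt_line (hω : ContDiff ℝ 2 ω) (hs : HasCompactSupport ω) (σ : ℝ)
    (hY : imPart (z + ζ • v) ≠ 0) :
    (Δ fun w : ℂ => uExt ω σ (z + w • v)) ζ =
      (cross (imPart (z + ζ • v)) (rePart v) ^ 2 +
          cross (imPart (z + ζ • v)) (imPart v) ^ 2) /
        (π * euclNorm (imPart (z + ζ • v)) ^ 2) *
        ((∫ t : ℝ, lap ω (rePart (z + ζ • v) + t • imPart (z + ζ • v))) +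
          π * σ / euclNorm (imPart (z + ζ • v))) := by
  have hnorm := euclNorm_pos hY
  have hsmooth := contDiffAt_euclNorm_imPart_line hY
  simp only [uExt_eq]
  refine ((contDiffAt_extension_line hω hs hY).laplacian_add
    (f₂ := σ • fun w : ℂ => euclNorm (imPart (z + w • v))) (hsmooth.const_smul σ)).trans ?_
  rw [laplacian_extension_line hω hs hY, laplacian_smul σ hsmooth,
    laplacian_comp_add_smul imPart (contDiffAt_euclNorm hY), imPart_I_smul,
    fderiv_fderiv_euclNorm_apply hY, fderiv_fderiv_euclNorm_apply hY, smul_eq_mul]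
  field_simp
  ring

theorem continuous_uExt (hω : Continuous ω) (hs : HasCompactSupport ω) (σ : ℝ) :
    Continuous (uExt ω σ) := by
  obtain ⟨B, hB⟩ := hs.exists_bound_of_continuous hω
  have hE : Continuous fun z : ℂ × ℂ =>
      ∫ t : ℝ, ω (rePart z + t • imPart z) / (1 + t ^ 2) := by
    refine continuous_of_dominated (bound := fun t : ℝ => B * (1 + t ^ 2)⁻¹) (fun z => ?_)
      (fun z => .of_forall fun t => ?_) (integrable_inv_one_add_sq.const_mul B)
      (.of_forall fun t => by fun_prop)
    · exact (Continuous.div (by fun_prop) (by fun_prop)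
        fun t => by positivity).aestronglyMeasurable
    · rw [norm_div, div_eq_mul_inv, norm_of_nonneg (by positivity : 0 ≤ 1 + t ^ 2)]
      gcongr
      exact hB _
  exact (hE.const_mul _).add ((continuous_euclNorm.comp imPart.continuous).const_mul σ)

end ComplexLine

section Plurisubharmonic

variable {u : ℂ × ℂ → ℝ}

theorem psh_iff_le_circleAverage :
    Psh u ↔ ∀ z v : ℂ × ℂ, u z ≤ circleAverage (fun ζ : ℂ => u (z + ζ • v)) 0 1 := by
  simp [Psh, circleAverage, circleMap]

theorem Psh.le_circleAverage (hu : Psh u) (z v : ℂ × ℂ) (r : ℝ) :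
    u z ≤ circleAverage (fun ζ : ℂ => u (z + ζ • v)) 0 r := by
  have hsmul (θ : ℝ) : circleMap 0 1 θ • (r : ℂ) • v = circleMap 0 r θ • v := by
    rw [circleMap_zero, circleMap_zero, smul_smul, Complex.ofReal_one, one_mul, mul_comm]
  simpa only [circleAverage, hsmul] using psh_iff_le_circleAverage.1 hu z ((r : ℂ) • v)

theorem psh_of_dense (hu : Continuous u) {S : Set (ℂ × ℂ)} (hS : Dense S)
    (h : ∀ z, ∀ v ∈ S, u z ≤ circleAverage (fun ζ : ℂ => u (z + ζ • v)) 0 1) : Psh u := by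
  refine psh_iff_le_circleAverage.2 fun z v => ?_
  have hclosed : IsClosed {v | u z ≤ circleAverage (fun ζ : ℂ => u (z + ζ • v)) 0 1} := by
    refine isClosed_le continuous_const (Continuous.const_smul (c := (2 * π)⁻¹) ?_)
    exact intervalIntegral.continuous_parametric_intervalIntegral_of_continuous'
      (f := fun v θ => u (z + circleMap 0 1 θ • v)) (by fun_prop) _ _
  exact hclosed.closure_subset_iff.2 (h z) (hS v)

theorem dense_cross_rePart_imPart_ne_zero :
    Dense {v : ℂ × ℂ | cross (rePart v) (imPart v) ≠ 0} := by
  intro v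
  set p : Polynomial ℝ := (Polynomial.X + Polynomial.C v.1.re) *
    (Polynomial.X + Polynomial.C v.2.im) - Polynomial.C (v.2.re * v.1.im)
  have hp : p ≠ 0 := by
    refine (((Polynomial.monic_X_add_C _).mul (Polynomial.monic_X_add_C _)).sub_of_left ?_).ne_zero
    rw [Polynomial.degree_mul, Polynomial.degree_X_add_C, Polynomial.degree_X_add_C]
    exact Polynomial.degree_C_le.trans_lt (by norm_num)
  have hdense : Dense {s : ℝ | p.eval s ≠ 0} :=
    (Polynomial.finite_setOfPred_isRoot hp).countable.dense_compl ℝ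
  have hpath : Continuous fun s : ℝ => v + s • ((1, Complex.I) : ℂ × ℂ) := by fun_prop
  have hv : v + (0 : ℝ) • ((1, Complex.I) : ℂ × ℂ) = v := by simp
  rw [← hv]
  refine closure_mono ?_ (hpath.range_subset_closure_image_dense hdense ⟨0, rfl⟩)
  rintro _ ⟨s, hs, rfl⟩
  have heval : cross (rePart (v + s • (1, Complex.I))) (imPart (v + s • (1, Complex.I))) =
      p.eval s := by
    simp [cross, rePart, imPart, p]
    ring
  exact heval.trans_ne hs

theorem eq_zero_of_imPart_smul_eq_zero {v : ℂ × ℂ} (hv : cross (rePart v) (imPart v) ≠ 0) {c : ℂ}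
    (h : imPart (c • v) = 0) : c = 0 := by
  have h₁ : c.re * v.1.im + c.im * v.1.re = 0 := by simpa [imPart] using congrArg Prod.fst h
  have h₂ : c.re * v.2.im + c.im * v.2.re = 0 := by simpa [imPart] using congrArg Prod.snd h
  have hre : c.re * cross (rePart v) (imPart v) = 0 := by
    change c.re * (v.1.re * v.2.im - v.2.re * v.1.im) = 0
    linear_combination v.1.re * h₂ - v.2.re * h₁
  have him : c.im * cross (rePart v) (imPart v) = 0 := by
    change c.im * (v.1.re * v.2.im - v.2.re * v.1.im) = 0
    linear_combination v.2.im * h₁ - v.1.im * h₂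
  exact Complex.ext ((mul_eq_zero.1 hre).resolve_right hv) ((mul_eq_zero.1 him).resolve_right hv)

theorem exists_forall_ne_imPart_add_smul_ne_zero (z : ℂ × ℂ) {v : ℂ × ℂ}
    (hv : cross (rePart v) (imPart v) ≠ 0) : ∃ ζ₀ : ℂ, ∀ ζ ≠ ζ₀, imPart (z + ζ • v) ≠ 0 := by
  by_cases h : ∃ ζ₀ : ℂ, imPart (z + ζ₀ • v) = 0
  · obtain ⟨ζ₀, hζ₀⟩ := h
    refine ⟨ζ₀, fun ζ hne hζ => hne (sub_eq_zero.1 (eq_zero_of_imPart_smul_eq_zero hv ?_))⟩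
    rw [sub_smul, ← add_sub_add_left_eq_sub _ _ z, map_sub, hζ, hζ₀, sub_zero]
  · exact ⟨0, fun ζ _ hζ => h ⟨ζ, hζ⟩⟩

variable {ω : ℝ × ℝ → ℝ} {σ : ℝ}

theorem laplacian_uExt_line_nonneg (hω : ContDiff ℝ 2 ω) (hs : HasCompactSupport ω)
    (h : ∀ s θ : ℝ, 0 ≤ xray (lap ω) s θ + π * σ) {z v : ℂ × ℂ} {ζ : ℂ}
    (hY : imPart (z + ζ • v) ≠ 0) : 0 ≤ (Δ fun w : ℂ => uExt ω σ (z + w • v)) ζ := by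
  obtain ⟨s, θ, hxray⟩ := exists_integral_add_smul_eq_xray_div (rePart (z + ζ • v)) hY
  rw [laplacian_uExt_line hω hs σ hY, hxray, ← add_div]
  exact mul_nonneg (by positivity) (div_nonneg (h s θ) (euclNorm_pos hY).le)

theorem psh_uExt (hω : ContDiff ℝ 2 ω) (hs : HasCompactSupport ω)
    (h : ∀ s θ : ℝ, 0 ≤ xray (lap ω) s θ + π * σ) : Psh (uExt ω σ) := by
  have hu := continuous_uExt hω.continuous hs σ
  refine psh_of_dense hu dense_cross_rePart_imPart_ne_zero fun z v hv => ?_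
  obtain ⟨ζ₀, hζ₀⟩ := exists_forall_ne_imPart_add_smul_ne_zero z hv
  simpa using le_circleAverage_of_laplacian_nonneg (f := fun ζ : ℂ => uExt ω σ (z + ζ • v)) (c := 0)
    one_pos (by fun_prop) (fun ζ _ hζ => contDiffAt_uExt_line hω hs σ (hζ₀ ζ hζ))
    (fun ζ _ hζ => laplacian_uExt_line_nonneg hω hs h (hζ₀ ζ hζ))

-- The line through `s n_θ + i e_θ` in the real direction `n_θ`, where `e_θ = (cos θ, sin θ)` and
-- `n_θ = (-sin θ, cos θ)`, detects the X-ray transform along `{s n_θ + t e_θ}`.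
theorem Psh.xray_lap_add_nonneg (hω : ContDiff ℝ 2 ω) (hs : HasCompactSupport ω)
    (hu : Psh (uExt ω σ)) (s θ : ℝ) : 0 ≤ xray (lap ω) s θ + π * σ := by
  set e : ℝ × ℝ := (cos θ, sin θ) with he
  set n : ℝ × ℝ := (-sin θ, cos θ) with hn
  set z : ℂ × ℂ := (⟨s * n.1, e.1⟩, ⟨s * n.2, e.2⟩)
  set v : ℂ × ℂ := (n.1, n.2)
  have hcross : cross e n = 1 := by simp [cross, he, hn, ← sq]
  have hnorm : euclNorm e = 1 := by simp [euclNorm, he]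
  have hz₀ : z + (0 : ℂ) • v = z := by simp
  have hY : imPart (z + (0 : ℂ) • v) = e := by rw [hz₀]; rfl
  have hX : rePart (z + (0 : ℂ) • v) = s • n := by rw [hz₀]; rfl
  have hY₀ : imPart (z + (0 : ℂ) • v) ≠ 0 := by
    rw [hY]
    intro h
    simp [h, cross] at hcross
  have hlap : 0 ≤ (Δ fun w : ℂ => uExt ω σ (z + w • v)) 0 :=
    laplacian_nonneg_of_le_circleAverage (contDiffAt_uExt_line hω hs σ hY₀)
      (.of_forall fun r => by simpa using hu.le_circleAverage z v r)
  have hv : rePart v = n := rfl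
  have hv' : imPart v = 0 := rfl
  have hcross₀ : cross e 0 = 0 := by simp [cross]
  rw [laplacian_uExt_line hω hs σ hY₀, hX, hY, hv, hv', hcross, hcross₀, hnorm,
    integral_add_smul_eq_xray] at hlap
  simpa [pi_pos] using hlap

end Plurisubharmonic

theorem psh_iff_xray_general {ω : ℝ × ℝ → ℝ} (hω : ContDiff ℝ 2 ω) (hs : HasCompactSupport ω)
    (σ : ℝ) : Psh (uExt ω σ) ↔ ∀ s θ : ℝ, 0 ≤ xray (lap ω) s θ + π * σ :=
  ⟨Psh.xray_lap_add_nonneg hω hs, psh_uExt hω hs⟩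

/-- `Eω + σ|y|` is plurisubharmonic iff `T(Δω)(s,θ) + πσ ≥ 0` for all `s, θ`. -/
theorem psh_iff_xray (ω : ℝ × ℝ → ℝ) (hω : ContDiff ℝ (⊤ : ℕ∞) ω) (hsupp : HasCompactSupport ω)
    (σ : ℝ) :
    Psh (uExt ω σ) ↔ ∀ s θ : ℝ, 0 ≤ xray (lap ω) s θ + π * σ :=
  psh_iff_xray_general (hω.of_le (WithTop.coe_le_coe.2 le_top)) hsupp σ

end
end
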